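/- arXiv:2307.02517 — 2 statements merged into one kernel-verified Lean document; each statement's English description precedes it below -/
import Mathlib

section
/- Let G be a finite simple connected graph, m ≥ 2 an integer, q ∈ V(G), and {w1, w2} an edge of G. Let p = q^{1/m}, and let v be the vertex of G^{1/m} on the thread replacing {w1, w2} at distance x from w1^{1/m}, where 0 < x < m/2. Then the nearest integer to dist_{G^{1/m}}(p, v) / m equals dist_G(q, w1) (the value dist_{G^{1/m}}(p, v) mod m is never exactly m/2, so the nearest integer is well defined). -/
open SimpleGraph

/-- The vertex type of the `m`-subdivision of a simple graph `G`:
branch vertices (`Sum.inl`) together with, for each edge (oriented from its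
smaller to its larger endpoint) and each `i : Fin (m-1)`, the internal vertex
of the corresponding thread at distance `i+1` from the smaller endpoint. -/
abbrev SubVert (V : Type*) [LinearOrder V] (G : SimpleGraph V) (m : ℕ) : Type _ :=
  V ⊕ ({e : V × V // G.Adj e.1 e.2 ∧ e.1 < e.2} × Fin (m - 1))

/-- Basic adjacency generating relation for the `m`-subdivision. -/
def subPre {V : Type*} [LinearOrder V] (G : SimpleGraph V) (m : ℕ) :
    SubVert V G m → SubVert V G m → Prop
  | Sum.inl u, Sum.inl v => m = 1 ∧ G.Adj u v
  | Sum.inl u, Sum.inr ei => (u = ei.1.1.1 ∧ (ei.2 : ℕ) = 0) ∨ (u = ei.1.1.2 ∧ (ei.2 : ℕ) + 2 = m)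
  | Sum.inr ei, Sum.inr ej => ei.1 = ej.1 ∧ (ei.2 : ℕ) + 1 = (ej.2 : ℕ)
  | Sum.inr _, Sum.inl _ => False

/-- The `m`-subdivision `G^{1/m}` of `G`: every edge of `G` is replaced by a
path (thread) of length `m`. -/
def Subdiv {V : Type*} [LinearOrder V] (G : SimpleGraph V) (m : ℕ) :
    SimpleGraph (SubVert V G m) :=
  SimpleGraph.fromRel (subPre G m)

/-- The vertex of `G^{1/m}` lying on the thread replacing the edge `{w₁, w₂}`
at distance `x` along the thread from `w₁` (for `0 ≤ x ≤ m`). -/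
def threadVert {V : Type*} [LinearOrder V] (G : SimpleGraph V) (m : ℕ) (w₁ w₂ : V)
    (h : G.Adj w₁ w₂) (x : ℕ) : SubVert V G m :=
  if hx0 : x = 0 then Sum.inl w₁
  else if hxm : m ≤ x then Sum.inl w₂
  else if hlt : w₁ < w₂ then
    Sum.inr (⟨(w₁, w₂), h, hlt⟩, ⟨x - 1, by omega⟩)
  else
    Sum.inr (⟨(w₂, w₁), h.symm, lt_of_le_of_ne (not_lt.mp hlt) h.ne'⟩, ⟨m - x - 1, by omega⟩)

/-- A vertex of `G^{1/m}` lies on the thread replacing the edge `{w₁, w₂}`. -/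
def OnThread {V : Type*} [LinearOrder V] (G : SimpleGraph V) (m : ℕ) (w₁ w₂ : V)
    (h : G.Adj w₁ w₂) (v : SubVert V G m) : Prop :=
  ∃ x ≤ m, v = threadVert G m w₁ w₂ h x

/-!
A shortest path from a branch vertex `q` to a vertex of the thread of `{u, v}` enters that thread
through `u` or `v`, so the vertex at position `x` is at distance
`min (m d(u) + x) (m d(v) + (m - x))`, where `d = dist_G(q, ·)`. The upper bound is given by
explicit walks. For the lower bound, the formula defines a function on `G^{1/m}` that vanishes at
`q` and grows by at most `1` along each edge. As `d(v) ≥ d(u) - 1`, for `2x ≤ m` this minimum is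
`m d(u) ± x`, which is within less than `m / 2` of the multiple `m d(u)` of `m` when `2x < m`.
-/

section Metric

variable {V : Type*} {G : SimpleGraph V} {u v : V}

lemma le_add_walk_length_of_forall_adj_le_add_one {f : V → ℕ}
    (hf : ∀ a b, G.Adj a b → f b ≤ f a + 1) (p : G.Walk u v) : f v ≤ f u + p.length := by
  induction p with
  | nil => simp
  | cons h p ih =>
    have := hf _ _ h
    rw [Walk.length_cons]
    omega

lemma le_add_dist_of_forall_adj_le_add_one {f : V → ℕ}
    (hf : ∀ a b, G.Adj a b → f b ≤ f a + 1) (h : G.Reachable u v) : f v ≤ f u + G.dist u v := by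
  obtain ⟨p, hp⟩ := h.exists_walk_length_eq_dist
  exact hp ▸ le_add_walk_length_of_forall_adj_le_add_one hf p

lemma mul_dist_le_mul_dist_add_of_adj (h : G.Adj u v) (m : ℕ) (q : V) :
    m * G.dist q v ≤ m * G.dist q u + m :=
  calc m * G.dist q v ≤ m * (G.dist q u + G.dist u v) := by
        gcongr
        exact h.reachable.dist_triangle_right q
    _ = m * G.dist q u + m := by rw [dist_eq_one_iff_adj.mpr h, mul_add_one]

end Metric

section Rounding

lemma round_div_eq_of_two_mul_abs_sub_mul_lt {K : Type*} [Field K] [LinearOrder K]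
    [IsStrictOrderedRing K] [FloorRing K] {a b : K} {k : ℤ} (h : 2 * |a - b * k| < b) :
    round (a / b) = k := by
  have hb : 0 < b := lt_of_le_of_lt (by positivity) h
  have hlt : |a - b * k| < b / 2 := by linarith
  obtain ⟨hleft, hright⟩ := abs_lt.mp hlt
  rw [round_eq_iff, Set.mem_Ico, le_div_iff₀ hb, div_lt_iff₀ hb]
  constructor <;> linarith

lemma two_mul_emod_ne_of_two_mul_abs_sub_mul_lt {a m k : ℤ} (h : 2 * |a - m * k| < m) :
    2 * (a % m) ≠ m := by
  intro hhalf
  have hodd : 2 * (a - m * k) = m * (2 * (a / m - k) + 1) := by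
    linear_combination hhalf - 2 * Int.emod_add_mul_ediv a m
  have hm : 0 < m := lt_of_le_of_lt (by positivity) h
  have hone : 1 ≤ |2 * (a / m - k) + 1| := Int.one_le_abs (by omega)
  have : m ≤ 2 * |a - m * k| :=
    calc m ≤ m * |2 * (a / m - k) + 1| := le_mul_of_one_le_right hm.le hone
      _ = |2 * (a - m * k)| := by rw [hodd, abs_mul, abs_of_pos hm]
      _ = 2 * |a - m * k| := by rw [abs_mul, abs_two]
  omega

end Rounding

section Subdivision

variable {V : Type*} [LinearOrder V] {G : SimpleGraph V} {m x : ℕ} {q u v : V}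

lemma threadVert_zero (h : G.Adj u v) : threadVert G m u v h 0 = Sum.inl u := by
  simp [threadVert]

lemma threadVert_self (hm : 0 < m) (h : G.Adj u v) : threadVert G m u v h m = Sum.inl v := by
  simp [threadVert, hm.ne']

lemma threadVert_symm (hm : 0 < m) (h : G.Adj u v) (hx : x ≤ m) :
    threadVert G m v u h.symm (m - x) = threadVert G m u v h x := by
  rcases Nat.eq_zero_or_pos x with rfl | hpos
  · rw [Nat.sub_zero, threadVert_self hm, threadVert_zero]
  rcases hx.eq_or_lt with rfl | hlt
  · rw [Nat.sub_self, threadVert_self hm, threadVert_zero]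
  have hstart : m - x ≠ 0 := Nat.sub_ne_zero_of_lt hlt
  have hend : ¬m ≤ m - x := (Nat.sub_lt hm hpos).not_ge
  have hsub : m - (m - x) - 1 = x - 1 := by omega
  unfold threadVert
  rcases h.ne.lt_or_gt with huv | hvu
  · simp [huv, huv.not_gt, hsub, hpos.ne', hlt.not_ge, hstart, hend]
  · simp [hvu, hvu.not_gt, hpos.ne', hlt.not_ge, hstart, hend]

lemma subdiv_adj_threadVert_succ (h : G.Adj u v) (hx : x < m) :
    (Subdiv G m).Adj (threadVert G m u v h x) (threadVert G m u v h (x + 1)) := by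
  have := h.ne
  unfold threadVert Subdiv
  rw [SimpleGraph.fromRel_adj]
  split_ifs <;> simp only [subPre] <;> grind

lemma exists_walk_threadVert_length_eq (h : G.Adj u v) (hx : x ≤ m) :
    ∃ p : (Subdiv G m).Walk (Sum.inl u) (threadVert G m u v h x), p.length = x := by
  induction x with
  | zero => exact ⟨Walk.nil.copy rfl (threadVert_zero h).symm, by simp⟩
  | succ y ih =>
    obtain ⟨p, hp⟩ := ih (by omega)
    exact ⟨p.concat (subdiv_adj_threadVert_succ h hx), by simp [hp]⟩

lemma exists_walk_inl_length_eq_mul (hm : 0 < m) (w : G.Walk u v) :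
    ∃ p : (Subdiv G m).Walk (Sum.inl u) (Sum.inl v), p.length = m * w.length := by
  induction w with
  | nil => exact ⟨Walk.nil, rfl⟩
  | cons h w ih =>
    obtain ⟨p, hp⟩ := ih
    obtain ⟨t, ht⟩ := exists_walk_threadVert_length_eq h le_rfl
    refine ⟨(t.copy rfl (threadVert_self hm h)).append p, ?_⟩
    rw [Walk.length_append, Walk.length_copy, ht, hp, Walk.length_cons, mul_add_one, add_comm]

lemma exists_walk_length_eq_mul_dist_add (hm : 0 < m) (hq : G.Reachable q u) (h : G.Adj u v)
    (hx : x ≤ m) :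
    ∃ p : (Subdiv G m).Walk (Sum.inl q) (threadVert G m u v h x),
      p.length = m * G.dist q u + x := by
  obtain ⟨w, hw⟩ := hq.exists_walk_length_eq_dist
  obtain ⟨p, hp⟩ := exists_walk_inl_length_eq_mul hm w
  obtain ⟨t, ht⟩ := exists_walk_threadVert_length_eq h hx
  exact ⟨p.append t, by rw [Walk.length_append, hp, ht, hw]⟩

/-- The distance in `G^{1/m}` from the branch vertex of `q`, as predicted by distances in `G`: an
internal vertex of a thread is reached through one of the two ends of that thread. The index `i` of
an internal vertex starts at `0`, so this vertex is at distance `i + 1` from the smaller endpoint.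
Outside the component of `q` the values are junk, since `G.dist` is `0` there. -/
noncomputable def branchDist (G : SimpleGraph V) (m : ℕ) (q : V) : SubVert V G m → ℕ
  | Sum.inl u => m * G.dist q u
  | Sum.inr (e, i) =>
      min (m * G.dist q e.1.1 + (i + 1)) (m * G.dist q e.1.2 + (m - (i + 1)))

lemma branchDist_self : branchDist G m q (Sum.inl q) = 0 := by
  simp [branchDist]

lemma branchDist_threadVert (h : G.Adj u v) :
    branchDist G m q (threadVert G m u v h x) =
      min (m * G.dist q u + x) (m * G.dist q v + (m - x)) := by
  have huv := mul_dist_le_mul_dist_add_of_adj h m q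
  have hvu := mul_dist_le_mul_dist_add_of_adj h.symm m q
  unfold threadVert
  split_ifs <;> simp only [branchDist] <;> omega

lemma branchDist_le_add_one_of_subPre {a b : SubVert V G m} (h : subPre G m a b) :
    branchDist G m q b ≤ branchDist G m q a + 1 ∧
      branchDist G m q a ≤ branchDist G m q b + 1 := by
  rcases a with u | ⟨e, i⟩ <;> rcases b with v | ⟨⟨⟨f₁, f₂⟩, hf, hlt⟩, j⟩
  · obtain ⟨rfl, hadj⟩ := h
    exact ⟨mul_dist_le_mul_dist_add_of_adj hadj 1 q, mul_dist_le_mul_dist_add_of_adj hadj.symm 1 q⟩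
  · have h₁₂ : m * G.dist q f₂ ≤ m * G.dist q f₁ + m := mul_dist_le_mul_dist_add_of_adj hf m q
    have h₂₁ : m * G.dist q f₁ ≤ m * G.dist q f₂ + m := mul_dist_le_mul_dist_add_of_adj hf.symm m q
    simp only [subPre] at h
    rcases h with ⟨rfl, hj₀⟩ | ⟨rfl, hjm⟩ <;> simp only [branchDist] <;> omega
  · exact h.elim
  · simp only [subPre] at h
    obtain ⟨rfl, hij⟩ := h
    simp only [branchDist]
    omega

lemma branchDist_le_add_one_of_adj {a b : SubVert V G m} (h : (Subdiv G m).Adj a b) :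
    branchDist G m q b ≤ branchDist G m q a + 1 :=
  h.2.elim (fun hab ↦ (branchDist_le_add_one_of_subPre hab).1)
    (fun hba ↦ (branchDist_le_add_one_of_subPre hba).2)

theorem dist_threadVert (hm : 0 < m) (hq : G.Reachable q u) (h : G.Adj u v) (hx : x ≤ m) :
    (Subdiv G m).dist (Sum.inl q) (threadVert G m u v h x) =
      min (m * G.dist q u + x) (m * G.dist q v + (m - x)) := by
  obtain ⟨p, hp⟩ := exists_walk_length_eq_mul_dist_add hm hq h hx
  obtain ⟨r, hr⟩ :=
    threadVert_symm hm h hx ▸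
      exists_walk_length_eq_mul_dist_add hm (hq.trans h.reachable) h.symm (Nat.sub_le m x)
  apply le_antisymm
  · exact le_min (hp ▸ dist_le p) (hr ▸ dist_le r)
  · rw [← branchDist_threadVert h]
    simpa [branchDist_self] using le_add_dist_of_forall_adj_le_add_one
      (fun a b ↦ branchDist_le_add_one_of_adj (q := q)) p.reachable

lemma abs_dist_threadVert_sub_mul_dist (hm : 0 < m) (hq : G.Reachable q u) (h : G.Adj u v)
    (hx : 2 * x ≤ m) :
    |((Subdiv G m).dist (Sum.inl q) (threadVert G m u v h x) : ℤ) - m * G.dist q u| = x := by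
  have hdist := dist_threadVert hm hq h (by omega : x ≤ m)
  rcases lt_or_ge (G.dist q v) (G.dist q u) with hcloser | hfarther
  · have hstep : G.dist q u = G.dist q v + 1 := by
      have := mul_dist_le_mul_dist_add_of_adj h.symm 1 q
      omega
    rw [hstep, mul_add_one] at hdist
    have hminus : (Subdiv G m).dist (Sum.inl q) (threadVert G m u v h x) + x = m * G.dist q u := by
      rw [hstep, mul_add_one]
      omega
    rw [← Nat.cast_mul, ← hminus]
    simp
  · have hmono : m * G.dist q u ≤ m * G.dist q v := Nat.mul_le_mul_left m hfarther
    have hplus : (Subdiv G m).dist (Sum.inl q) (threadVert G m u v h x) = m * G.dist q u + x := by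
      omega
    rw [hplus]
    simp

theorem subdiv_dist_round_general (hq : G.Reachable q u) (h : G.Adj u v) (hx : 2 * x < m) :
    2 * ((Subdiv G m).dist (Sum.inl q) (threadVert G m u v h x) % m) ≠ m ∧
    round (((Subdiv G m).dist (Sum.inl q) (threadVert G m u v h x) : ℚ) / (m : ℚ)) =
      (G.dist q u : ℤ) := by
  have hnear : 2 * |((Subdiv G m).dist (Sum.inl q) (threadVert G m u v h x) : ℤ) -
      m * (G.dist q u : ℤ)| < m := by
    rw [abs_dist_threadVert_sub_mul_dist (by omega) hq h hx.le]
    exact_mod_cast hx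
  refine ⟨?_, round_div_eq_of_two_mul_abs_sub_mul_lt (by exact_mod_cast hnear)⟩
  exact_mod_cast two_mul_emod_ne_of_two_mul_abs_sub_mul_lt hnear

end Subdivision

/-- For `p = q^{1/m}` and `v` at distance `x` from `w₁` along the thread of the
edge `{w₁, w₂}` with `0 < x < m/2`: `dist(p,v) mod m` is never exactly `m/2`,
and the nearest integer to `dist(p,v) / m` equals `dist_G(q, w₁)`. -/
theorem subdiv_dist_round {n m : ℕ} (G : SimpleGraph (Fin n))
    (hG : G.Connected) (hm : 2 ≤ m) (q w₁ w₂ : Fin n) (hw : G.Adj w₁ w₂)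
    (x : ℕ) (hx0 : 0 < x) (hxm : 2 * x < m) :
    2 * ((Subdiv G m).dist (Sum.inl q) (threadVert G m w₁ w₂ hw x) % m) ≠ m ∧
    round (((Subdiv G m).dist (Sum.inl q) (threadVert G m w₁ w₂ hw x) : ℚ) / (m : ℚ)) =
      (G.dist q w₁ : ℤ) := by
  exact subdiv_dist_round_general (hG q w₁) hw hxm
end

section
/- Let G be a finite simple connected graph, m ≥ 2 an integer, and b a branch vertex of G^{1/m}. Then for every vertex v of G^{1/m}, m divides dist_{G^{1/m}}(b, v) if and only if v is a branch vertex. -/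
open SimpleGraph

/-!
The distance from a branch vertex `b` is explicit: a walk reaching the vertex at distance `x` from
`u` on the thread of the edge `uw` can only come through `u` or through `w`, so its distance from
`b` is the smaller of `m * d(b, u) + x` and `m * d(b, w) + (m - x)`. Walks along threads attain this
value, and the formula changes by at most one along every edge of `G^{1/m}`, so no walk is shorter.
Strictly inside a thread both candidates are nonzero modulo `m`.
-/

section

variable {α : Type*} {H : SimpleGraph α} {a c : α}

theorem le_add_length_of_forall_adj {f : α → ℕ} (hf : ∀ x y, H.Adj x y → f y ≤ f x + 1)
    (p : H.Walk a c) : f c ≤ f a + p.length := by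
  induction p with
  | nil => exact le_rfl
  | cons hadj p ih =>
    have hstep := hf _ _ hadj
    rw [Walk.length_cons]
    omega

theorem le_add_dist_of_forall_adj {f : α → ℕ} (hf : ∀ x y, H.Adj x y → f y ≤ f x + 1)
    (h : H.Reachable a c) : f c ≤ f a + H.dist a c := by
  obtain ⟨p, hp⟩ := h.exists_walk_length_eq_dist
  exact hp ▸ le_add_length_of_forall_adj hf p

theorem dist_le_dist_add_one_of_adj {x y : α} (h : H.Adj x y) :
    H.dist a y ≤ H.dist a x + 1 := by
  rw [← dist_eq_one_iff_adj.mpr h]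
  exact h.reachable.dist_triangle_right a

end

namespace Subdiv

variable {V : Type*} [LinearOrder V] {G : SimpleGraph V} {m x : ℕ} {b u w : V}

theorem threadVert_zero (h : G.Adj u w) : threadVert G m u w h 0 = Sum.inl u := by
  simp [threadVert]

theorem threadVert_length (hm : 0 < m) (h : G.Adj u w) :
    threadVert G m u w h m = Sum.inl w := by
  simp [threadVert, hm.ne']

theorem threadVert_symm (hm : 0 < m) (h : G.Adj u w) (hx : x ≤ m) :
    threadVert G m w u h.symm (m - x) = threadVert G m u w h x := by
  rcases x.eq_zero_or_pos with rfl | hx0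
  · rw [Nat.sub_zero, threadVert_length hm, threadVert_zero]
  rcases hx.eq_or_lt with rfl | hxm
  · rw [Nat.sub_self, threadVert_length hm, threadVert_zero]
  have hmx0 : m - x ≠ 0 := by omega
  have hmx : ¬ m ≤ m - x := by omega
  rcases lt_or_gt_of_ne h.ne with huw | huw
  · have : m - (m - x) - 1 = x - 1 := by omega
    simp [threadVert, hx0.ne', hxm.not_ge, hmx0, hmx, huw, huw.not_gt, this]
  · simp [threadVert, hx0.ne', hxm.not_ge, hmx0, hmx, huw, huw.not_gt]

theorem inr_eq_threadVert (e : {e : V × V // G.Adj e.1 e.2 ∧ e.1 < e.2}) (i : Fin (m - 1)) :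
    Sum.inr (e, i) = threadVert G m e.1.1 e.1.2 e.2.1 ((i : ℕ) + 1) := by
  have hi : ¬ m ≤ i + 1 := by omega
  simp [threadVert, hi, e.2.2]

theorem inr_eq_threadVert_symm (e : {e : V × V // G.Adj e.1 e.2 ∧ e.1 < e.2}) (i : Fin (m - 1)) :
    Sum.inr (e, i) = threadVert G m e.1.2 e.1.1 e.2.1.symm (m - ((i : ℕ) + 1)) := by
  have hi : (i : ℕ) + 1 ≤ m := by omega
  rw [threadVert_symm (by omega) e.2.1 hi, inr_eq_threadVert]

theorem adj_threadVert_succ (h : G.Adj u w) (hx : x < m) :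
    (Subdiv G m).Adj (threadVert G m u w h x) (threadVert G m u w h (x + 1)) := by
  have hne := h.ne
  rw [Subdiv, fromRel_adj]
  unfold threadVert
  split_ifs <;> grind [subPre]

theorem exists_threadVert_of_subPre {p q : SubVert V G m} (h : subPre G m p q) :
    ∃ (u w : V) (huw : G.Adj u w), ∃ x < m,
      p = threadVert G m u w huw x ∧ q = threadVert G m u w huw (x + 1) := by
  rcases p with u | ⟨e, i⟩ <;> rcases q with w | ⟨f, j⟩
  · obtain ⟨rfl, huw⟩ := h
    exact ⟨u, w, huw, 0, one_pos, (threadVert_zero huw).symm,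
      (threadVert_length one_pos huw).symm⟩
  · rcases h with ⟨rfl, hj⟩ | ⟨rfl, (hj : (j : ℕ) + 2 = m)⟩
    · refine ⟨_, _, f.2.1, 0, by omega, (threadVert_zero _).symm, ?_⟩
      rw [inr_eq_threadVert, hj]
    · refine ⟨_, _, f.2.1.symm, 0, by omega, (threadVert_zero _).symm, ?_⟩
      rw [inr_eq_threadVert_symm, show m - ((j : ℕ) + 1) = 0 + 1 by omega]
  · exact h.elim
  · obtain ⟨rfl, hij⟩ := h
    refine ⟨_, _, e.2.1, i + 1, by omega, inr_eq_threadVert e i, ?_⟩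
    rw [inr_eq_threadVert, hij]

theorem adj_iff_exists_threadVert {p q : SubVert V G m} :
    (Subdiv G m).Adj p q ↔ ∃ (u w : V) (huw : G.Adj u w), ∃ x < m,
      p = threadVert G m u w huw x ∧ q = threadVert G m u w huw (x + 1) := by
  constructor
  · intro h
    rcases ((fromRel_adj _ _ _).mp h).2 with h | h
    · exact exists_threadVert_of_subPre h
    · obtain ⟨u, w, huw, x, hx, rfl, rfl⟩ := exists_threadVert_of_subPre h
      refine ⟨w, u, huw.symm, m - (x + 1), by omega, ?_, ?_⟩
      · rw [threadVert_symm (by omega) huw hx]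
      · rw [show m - (x + 1) + 1 = m - x by omega, threadVert_symm (by omega) huw hx.le]
  · rintro ⟨u, w, huw, x, hx, rfl, rfl⟩
    exact adj_threadVert_succ huw hx

theorem exists_walk_threadVert (h : G.Adj u w) (hx : x ≤ m) :
    ∃ p : (Subdiv G m).Walk (Sum.inl u) (threadVert G m u w h x), p.length = x := by
  induction x with
  | zero =>
    rw [threadVert_zero]
    exact ⟨Walk.nil, rfl⟩
  | succ x ih =>
    obtain ⟨p, hp⟩ := ih (by omega)
    exact ⟨p.concat (adj_threadVert_succ h hx), by rw [Walk.length_concat, hp]⟩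

theorem exists_walk_of_adj (hm : 0 < m) (h : G.Adj u w) :
    ∃ p : (Subdiv G m).Walk (Sum.inl u) (Sum.inl w), p.length = m := by
  rw [← threadVert_length hm h]
  exact exists_walk_threadVert h le_rfl

theorem exists_walk_of_walk (hm : 0 < m) (p : G.Walk u w) :
    ∃ q : (Subdiv G m).Walk (Sum.inl u) (Sum.inl w), q.length = m * p.length := by
  induction p with
  | nil => exact ⟨Walk.nil, rfl⟩
  | cons h p ih =>
    obtain ⟨q, hq⟩ := ih
    obtain ⟨r, hr⟩ := exists_walk_of_adj hm h
    exact ⟨r.append q, by rw [Walk.length_append, Walk.length_cons, hq, hr]; ring⟩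

theorem exists_walk_length_eq_mul_dist (hm : 0 < m) (h : G.Reachable b u) :
    ∃ p : (Subdiv G m).Walk (Sum.inl b) (Sum.inl u), p.length = m * G.dist b u := by
  obtain ⟨p, hp⟩ := h.exists_walk_length_eq_dist
  exact hp ▸ exists_walk_of_walk hm p

theorem exists_walk_length_eq_mul_dist_add (hm : 0 < m) (hb : G.Reachable b u) (h : G.Adj u w)
    (hx : x ≤ m) :
    ∃ p : (Subdiv G m).Walk (Sum.inl b) (threadVert G m u w h x),
      p.length = m * G.dist b u + x := by
  obtain ⟨p, hp⟩ := exists_walk_length_eq_mul_dist hm hb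
  obtain ⟨q, hq⟩ := exists_walk_threadVert h hx
  exact ⟨p.append q, by rw [Walk.length_append, hp, hq]⟩

/-- A branch vertex attached to each vertex of `G^{1/m}`, used to compare the connected components
of `G^{1/m}` with those of `G`: a branch vertex is its own anchor, and an internal vertex is
anchored at the smaller end of its thread. -/
def anchor : SubVert V G m → V :=
  Sum.elim id fun ei => ei.1.1.1

theorem reachable_anchor_threadVert (h : G.Adj u w) (x : ℕ) :
    G.Reachable u (anchor (threadVert G m u w h x)) := by
  unfold threadVert
  split_ifs
  exacts [.rfl, h.reachable, .rfl, h.reachable]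

theorem reachable_anchor_of_adj {p q : SubVert V G m} (h : (Subdiv G m).Adj p q) :
    G.Reachable (anchor p) (anchor q) := by
  obtain ⟨u, w, huw, x, -, rfl, rfl⟩ := adj_iff_exists_threadVert.mp h
  exact (reachable_anchor_threadVert huw x).symm.trans (reachable_anchor_threadVert huw (x + 1))

theorem reachable_anchor {p q : SubVert V G m} (h : (Subdiv G m).Reachable p q) :
    G.Reachable (anchor p) (anchor q) := by
  rw [reachable_iff_reflTransGen] at h ⊢
  exact h.lift' anchor fun _ _ hadj =>
    (reachable_iff_reflTransGen _ _).mp (reachable_anchor_of_adj hadj)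

/-- The closed formula for the distance from the branch vertex `b` in `G^{1/m}`: an internal vertex
is reached through the nearer end of its thread. The internal vertex with index `i` is at distance
`i + 1` from the smaller end, as in `SubVert`. -/
noncomputable def branchDist (b : V) : SubVert V G m → ℕ
  | Sum.inl w => m * G.dist b w
  | Sum.inr (e, i) => min (m * G.dist b e.1.1 + (i + 1)) (m * G.dist b e.1.2 + (m - (i + 1)))

theorem branchDist_threadVert (b : V) (h : G.Adj u w) (hx : x ≤ m) :
    branchDist b (threadVert G m u w h x) =
      min (m * G.dist b u + x) (m * G.dist b w + (m - x)) := by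
  have huw : m * G.dist b w ≤ m * G.dist b u + m :=
    Nat.mul_le_mul_left m (dist_le_dist_add_one_of_adj h)
  have hwu : m * G.dist b u ≤ m * G.dist b w + m :=
    Nat.mul_le_mul_left m (dist_le_dist_add_one_of_adj h.symm)
  unfold threadVert
  split_ifs <;> simp only [branchDist] <;> omega

theorem branchDist_le_add_one_of_adj (b : V) {p q : SubVert V G m} (h : (Subdiv G m).Adj p q) :
    branchDist b q ≤ branchDist b p + 1 := by
  obtain ⟨u, w, huw, x, hx, rfl, rfl⟩ := adj_iff_exists_threadVert.mp h
  rw [branchDist_threadVert b huw hx.le, branchDist_threadVert b huw hx]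
  omega

theorem exists_walk_length_eq_branchDist (hm : 0 < m) {v : SubVert V G m}
    (hv : G.Reachable b (anchor v)) :
    ∃ p : (Subdiv G m).Walk (Sum.inl b) v, p.length = branchDist b v := by
  rcases v with w | ⟨e, i⟩
  · exact exists_walk_length_eq_mul_dist hm hv
  have hi : (i : ℕ) + 1 ≤ m := by omega
  simp only [branchDist]
  rcases min_choice (m * G.dist b e.1.1 + (i + 1)) (m * G.dist b e.1.2 + (m - (i + 1)))
    with hmin | hmin <;> rw [hmin]
  · rw [inr_eq_threadVert]
    exact exists_walk_length_eq_mul_dist_add hm hv e.2.1 hi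
  · rw [inr_eq_threadVert_symm]
    exact exists_walk_length_eq_mul_dist_add hm (hv.trans e.2.1.reachable) e.2.1.symm
      (Nat.sub_le _ _)

theorem reachable_inl_iff (hm : 0 < m) {v : SubVert V G m} :
    (Subdiv G m).Reachable (Sum.inl b) v ↔ G.Reachable b (anchor v) :=
  ⟨reachable_anchor, fun h => (exists_walk_length_eq_branchDist hm h).elim fun p _ => p.reachable⟩

theorem dist_inl_eq_branchDist (hm : 0 < m) {v : SubVert V G m}
    (hv : (Subdiv G m).Reachable (Sum.inl b) v) :
    (Subdiv G m).dist (Sum.inl b) v = branchDist b v := by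
  obtain ⟨p, hp⟩ := exists_walk_length_eq_branchDist hm ((reachable_inl_iff hm).mp hv)
  apply le_antisymm (hp ▸ dist_le p)
  simpa [branchDist] using
    le_add_dist_of_forall_adj (fun _ _ => branchDist_le_add_one_of_adj b) hv

theorem dvd_branchDist_iff (b : V) (v : SubVert V G m) :
    m ∣ branchDist b v ↔ ∃ w : V, v = Sum.inl w := by
  rcases v with w | ⟨e, i⟩
  · simp [branchDist]
  have not_dvd (d : ℕ) {y : ℕ} (hy : 0 < y) (hym : y < m) : ¬ m ∣ m * d + y := by
    rw [Nat.dvd_add_right (dvd_mul_right m d)]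
    exact Nat.not_dvd_of_pos_of_lt hy hym
  simp only [branchDist, reduceCtorEq, exists_false, iff_false]
  rcases min_choice (m * G.dist b e.1.1 + (i + 1)) (m * G.dist b e.1.2 + (m - (i + 1)))
    with hmin | hmin <;> rw [hmin] <;> exact not_dvd _ (by omega) (by omega)

end Subdiv

theorem subdiv_dvd_dist_iff_branch_general {V : Type*} [LinearOrder V] {m : ℕ} (G : SimpleGraph V)
    (hm : 0 < m) (b : V) (v : SubVert V G m) (hv : (Subdiv G m).Reachable (Sum.inl b) v) :
    m ∣ (Subdiv G m).dist (Sum.inl b) v ↔ ∃ w : V, v = Sum.inl w := by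
  rw [Subdiv.dist_inl_eq_branchDist hm hv, Subdiv.dvd_branchDist_iff]

/-- For a branch vertex `b` of `G^{1/m}` and any vertex `v` of `G^{1/m}`,
`m` divides `dist(b, v)` if and only if `v` is a branch vertex. -/
theorem subdiv_dvd_dist_iff_branch {n m : ℕ} (G : SimpleGraph (Fin n))
    (hG : G.Connected) (hm : 2 ≤ m) (b : Fin n) (v : SubVert (Fin n) G m) :
    m ∣ (Subdiv G m).dist (Sum.inl b) v ↔ ∃ w : Fin n, v = Sum.inl w := by
  have hm0 : 0 < m := by omega
  exact subdiv_dvd_dist_iff_branch_general G hm0 b v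
    ((Subdiv.reachable_inl_iff hm0).mpr (hG.preconnected _ _))
end
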